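/- Let G = N(μ,Σ) be a d-dimensional Gaussian satisfying ‖Σ‖_F·√(log(nk/β)) ≤ (1/8)·tr(Σ) and ‖Σ‖₂·log²(nk/β) ≤ (1/8)·tr(Σ) for β < 1/2. Then the median radius R of G (the radius such that G assigns mass exactly 1/2 to the ball of radius R around μ) satisfies sqrt((3/4)·tr(Σ)) < R < sqrt((3/2)·tr(Σ)). -/

import Mathlib

open Real MeasureTheory Matrix

/-- The `d`-dimensional Gaussian measure `N(μ, S)`, given by its Lebesgue density. -/
noncomputable def mvGaussian (d : ℕ) (μ : Fin d → ℝ) (S : Matrix (Fin d) (Fin d) ℝ) :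
    Measure (Fin d → ℝ) :=
  volume.withDensity fun x => ENNReal.ofReal
    ((1 / Real.sqrt ((2 * π) ^ d * S.det)) *
      Real.exp (-(1 / 2) * ((fun i => x i - μ i) ⬝ᵥ (S⁻¹ *ᵥ fun i => x i - μ i))))

/-- Frobenius norm of a matrix. -/
noncomputable def frobNorm {d : ℕ} (S : Matrix (Fin d) (Fin d) ℝ) : ℝ :=
  Real.sqrt (∑ i, ∑ j, S i j ^ 2)

/-- Spectral norm of a symmetric PSD matrix, as the sup of `vᵀSv` over unit vectors. -/
noncomputable def specNorm {d : ℕ} (S : Matrix (Fin d) (Fin d) ℝ) : ℝ :=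
  sSup {t | ∃ v : Fin d → ℝ, ∑ i, v i ^ 2 = 1 ∧ t = v ⬝ᵥ (S *ᵥ v)}


open ProbabilityTheory in
lemma aux_pi {d : ℕ} (v : Fin d → NNReal) (hv : ∀ i, v i ≠ 0) :
    Measure.pi (fun i => gaussianReal 0 (v i)) =
      (volume : Measure (Fin d → ℝ)).withDensity
        (fun y => ENNReal.ofReal (∏ i, gaussianPDFReal 0 (v i) (y i))) := by
  refine Measure.pi_eq fun s hs => ?_
  rw [withDensity_apply _ (MeasurableSet.univ_pi hs),
    ← lintegral_indicator (MeasurableSet.univ_pi hs)]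
  have h1 : ∀ y : Fin d → ℝ, (Set.univ.pi s).indicator
      (fun y => ENNReal.ofReal (∏ i, gaussianPDFReal 0 (v i) (y i))) y =
      ENNReal.ofReal (∏ i, (s i).indicator (gaussianPDFReal 0 (v i)) (y i)) := by
    intro y
    by_cases hy : y ∈ Set.univ.pi s
    · rw [Set.indicator_of_mem hy]
      congr 1
      refine Finset.prod_congr rfl fun i _ => ?_
      rw [Set.indicator_of_mem (hy i trivial)]
    · rw [Set.indicator_of_notMem hy]
      simp only [Set.mem_pi, Set.mem_univ, true_imp_iff, not_forall] at hy
      obtain ⟨i, hi⟩ := hy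
      rw [Finset.prod_eq_zero (Finset.mem_univ i) (Set.indicator_of_notMem hi _)]
      simp
  simp_rw [h1]
  have hint : ∀ i, Integrable ((s i).indicator (gaussianPDFReal 0 (v i))) volume := fun i =>
    (integrable_gaussianPDFReal 0 (v i)).indicator (hs i)
  have hnn : ∀ i x, 0 ≤ (s i).indicator (gaussianPDFReal 0 (v i)) x := fun i x =>
    Set.indicator_nonneg (fun x _ => gaussianPDFReal_nonneg 0 (v i) x) x
  rw [← ofReal_integral_eq_lintegral_ofReal]
  · rw [integral_fintype_prod_volume_eq_prod (fun i => (s i).indicator (gaussianPDFReal 0 (v i))),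
      ENNReal.ofReal_prod_of_nonneg (fun i _ => integral_nonneg (hnn i))]
    refine Finset.prod_congr rfl fun i _ => ?_
    rw [gaussianReal_apply_eq_integral _ (hv i), integral_indicator (hs i)]
  · exact Integrable.fintype_prod (μ := fun _ => volume) hint
  · exact Filter.Eventually.of_forall fun y => Finset.prod_nonneg fun i _ => hnn i _

lemma aux_ball {d : ℕ} (μ : Fin d → ℝ) (S : Matrix (Fin d) (Fin d) ℝ) (hS : S.PosDef) (R : ℝ) :
    mvGaussian d μ S {x | Real.sqrt (∑ i, (x i - μ i) ^ 2) ≤ R} =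
    Measure.pi (fun i => ProbabilityTheory.gaussianReal 0 (hS.1.eigenvalues i).toNNReal)
      {y | Real.sqrt (∑ i, y i ^ 2) ≤ R} := by
  have hpos := hS.eigenvalues_pos
  rw [aux_pi _ (fun i => by simpa using hpos i)]
  set l := hS.1.eigenvalues with hl
  set U : Matrix (Fin d) (Fin d) ℝ := (hS.1.eigenvectorUnitary).1 with hU
  have hUU : Uᵀ * U = 1 := by
    have := Unitary.coe_star_mul_self hS.1.eigenvectorUnitary
    simpa [star_eq_conjTranspose] using this
  have hUU' : U * Uᵀ = 1 := mul_eq_one_comm.1 hUU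
  have hspec : S = U * diagonal l * Uᵀ := by
    have := hS.1.spectral_theorem
    rw [Unitary.conjStarAlgAut_apply] at this
    simpa [star_eq_conjTranspose, Function.comp_def] using this
  have hinv : S⁻¹ = U * diagonal (fun i => (l i)⁻¹) * Uᵀ := by
    apply inv_eq_right_inv
    rw [hspec]
    calc U * diagonal l * Uᵀ * (U * diagonal (fun i => (l i)⁻¹) * Uᵀ)
        = U * diagonal l * (Uᵀ * U) * diagonal (fun i => (l i)⁻¹) * Uᵀ := by
          simp only [Matrix.mul_assoc]
      _ = U * (diagonal l * diagonal (fun i => (l i)⁻¹)) * Uᵀ := by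
          rw [hUU]; simp only [Matrix.mul_assoc, Matrix.one_mul]
      _ = 1 := by
          rw [diagonal_mul_diagonal]
          have : (fun i => l i * (l i)⁻¹) = fun _ => (1:ℝ) := by
            funext i; exact mul_inv_cancel₀ (hpos i).ne'
          rw [this, diagonal_one, Matrix.mul_one, hUU']
  have hdetU : |U.det| = 1 := by
    have := congrArg Matrix.det hUU
    rw [det_mul, det_transpose, det_one] at this
    rw [abs_eq zero_le_one]
    exact mul_self_eq_one_iff.1 this
  have hdet0 : U.det ≠ 0 := by intro h; rw [h] at hdetU; simp at hdetU
  have hdetS : S.det = ∏ i, l i := by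
    have := hS.1.det_eq_prod_eigenvalues
    simpa using this
  have hmp1 : MeasurePreserving (toLin' U) (volume : Measure (Fin d → ℝ)) volume := by
    refine ⟨(LinearMap.continuous_of_finiteDimensional _).measurable, ?_⟩
    rw [Real.map_matrix_volume_pi_eq_smul_volume_pi hdet0, abs_inv, hdetU]
    simp
  have hmp : MeasurePreserving (fun y => μ + U *ᵥ y) (volume : Measure (Fin d → ℝ)) volume :=
    (measurePreserving_add_left volume μ).comp hmp1
  have hq : ∀ (y : Fin d → ℝ) (M : Matrix (Fin d) (Fin d) ℝ),
      (U *ᵥ y) ⬝ᵥ ((U * M * Uᵀ) *ᵥ (U *ᵥ y)) = y ⬝ᵥ (M *ᵥ y) := by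
    intro y M
    rw [mulVec_mulVec, Matrix.mul_assoc, hUU, Matrix.mul_one, ← mulVec_mulVec,
      dotProduct_mulVec, vecMul_mulVec, ← dotProduct_mulVec, hUU, one_mulVec]
  have hsq : ∀ y : Fin d → ℝ, ∑ i, (U *ᵥ y) i ^ 2 = ∑ i, y i ^ 2 := by
    intro y
    have := hq y 1
    rw [Matrix.mul_one, hUU', one_mulVec, one_mulVec] at this
    simpa [dotProduct, sq] using this
  have hmA : MeasurableSet {x : Fin d → ℝ | Real.sqrt (∑ i, (x i - μ i) ^ 2) ≤ R} :=
    measurableSet_le (by fun_prop) measurable_const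
  have hmB : MeasurableSet {x : Fin d → ℝ | Real.sqrt (∑ i, x i ^ 2) ≤ R} :=
    measurableSet_le (by fun_prop) measurable_const
  have hfm : Measurable fun x : Fin d → ℝ => ENNReal.ofReal
      ((1 / Real.sqrt ((2 * π) ^ d * S.det)) *
      Real.exp (-(1 / 2) * ((fun i => x i - μ i) ⬝ᵥ (S⁻¹ *ᵥ fun i => x i - μ i)))) := by
    unfold dotProduct mulVec dotProduct
    fun_prop
  rw [mvGaussian, withDensity_apply _ hmA, withDensity_apply _ hmB,
    ← hmp.setLIntegral_comp_preimage hmA hfm]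
  have hset : (fun y => μ + U *ᵥ y) ⁻¹' {x : Fin d → ℝ | Real.sqrt (∑ i, (x i - μ i) ^ 2) ≤ R} =
      {x : Fin d → ℝ | Real.sqrt (∑ i, x i ^ 2) ≤ R} := by
    ext y
    simp [hsq]
  rw [hset]
  refine lintegral_congr fun y => ?_
  congr 1
  have e1 : (fun i => (μ + U *ᵥ y) i - μ i) = U *ᵥ y := by funext i; simp
  rw [e1, hinv, hq, hdetS]
  simp only [ProbabilityTheory.gaussianPDFReal]
  rw [Finset.prod_mul_distrib, ← Real.exp_sum, Finset.prod_inv_distrib, one_div]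
  congr 1
  · congr 1
    rw [← Real.sqrt_prod _ (fun i _ => by positivity), Finset.prod_mul_distrib]
    simp only [Finset.prod_const, Finset.card_univ, Fintype.card_fin]
    congr 2
    exact Finset.prod_congr rfl fun i _ => (Real.coe_toNNReal _ (hpos i).le).symm
  · congr 1
    simp only [dotProduct, mulVec_diagonal, Finset.mul_sum]
    refine Finset.sum_congr rfl fun i _ => ?_
    rw [Real.coe_toNNReal _ (hpos i).le]
    have := (hpos i).ne'
    field_simp
    ring

lemma aux_frob {d : ℕ} (S : Matrix (Fin d) (Fin d) ℝ) (hS : S.IsHermitian) :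
    ∑ i, ∑ j, S i j ^ 2 = ∑ i, hS.eigenvalues i ^ 2 := by
  set l := hS.eigenvalues with hl
  set U : Matrix (Fin d) (Fin d) ℝ := (hS.eigenvectorUnitary).1 with hU
  have hUU : Uᵀ * U = 1 := by
    have := Unitary.coe_star_mul_self hS.eigenvectorUnitary
    simpa [star_eq_conjTranspose] using this
  have hspec : S = U * diagonal l * Uᵀ := by
    have := hS.spectral_theorem
    rw [Unitary.conjStarAlgAut_apply] at this
    simpa [star_eq_conjTranspose, Function.comp_def] using this
  have hsymm : ∀ i j, S j i = S i j := fun i j => by simpa using hS.apply i j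
  have h1 : ∑ i, ∑ j, S i j ^ 2 = (S * S).trace := by
    simp only [trace, diag, mul_apply]
    refine Finset.sum_congr rfl fun i _ => Finset.sum_congr rfl fun j _ => ?_
    rw [hsymm i j, sq]
  have h2 : S * S = U * (diagonal l * diagonal l * Uᵀ) := by
    calc S * S = U * diagonal l * (Uᵀ * U) * diagonal l * Uᵀ := by
          conv_lhs => rw [hspec]
          simp only [Matrix.mul_assoc]
      _ = _ := by rw [hUU]; simp only [Matrix.mul_assoc, Matrix.one_mul]
  rw [h1, h2, trace_mul_comm, Matrix.mul_assoc, hUU, Matrix.mul_one, diagonal_mul_diagonal,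
    trace_diagonal]
  exact Finset.sum_congr rfl fun i _ => (sq _).symm

open ProbabilityTheory in
lemma aux_moments (v : NNReal) :
    ∫ x, x ^ 2 ∂(gaussianReal 0 v) = v ∧ ∫ x, x ^ 4 ∂(gaussianReal 0 v) = 3 * (v : ℝ) ^ 2 := by
  have h0 : (0 : ℝ) ∈ interior (integrableExpSet id (gaussianReal 0 v)) := by
    rw [integrableExpSet_id_gaussianReal]; simp
  have hm : mgf id (gaussianReal 0 v) = fun t => 1 * rexp (v * t ^ 2 / 2) := by
    rw [mgf_id_gaussianReal]; simp
  have key : ∀ p q : ℝ → ℝ, (∀ t, HasDerivAt p (q t - v * t * p t) t) →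
      deriv (fun t => p t * rexp (v * t ^ 2 / 2)) = fun t => q t * rexp (v * t ^ 2 / 2) := by
    intro p q h
    funext t
    have h1 : HasDerivAt (fun t : ℝ => (v : ℝ) * t ^ 2 / 2) (v * t) t := by
      have := ((hasDerivAt_pow 2 t).const_mul (v : ℝ)).div_const 2
      exact this.congr_deriv (by norm_num; ring)
    have := ((h t).mul h1.exp).deriv
    refine this.trans ?_
    ring
  have d1 := key (fun _ => 1) (fun t => v * t) (fun t => by
    exact (hasDerivAt_const t (1:ℝ)).congr_deriv (by ring))
  have d2 := key (fun t => v * t) (fun t => v + v ^ 2 * t ^ 2) (fun t => by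
    exact ((hasDerivAt_id t).const_mul (v:ℝ)).congr_deriv (by ring))
  have d3 := key (fun t => v + v ^ 2 * t ^ 2) (fun t => 3 * v ^ 2 * t + v ^ 3 * t ^ 3) (fun t => by
    exact (((hasDerivAt_pow 2 t).const_mul ((v:ℝ)^2)).const_add (v:ℝ)).congr_deriv
      (by norm_num; ring))
  have d4 := key (fun t => 3 * v ^ 2 * t + v ^ 3 * t ^ 3)
    (fun t => 3 * v ^ 2 + 6 * v ^ 3 * t ^ 2 + v ^ 4 * t ^ 4) (fun t => by
    exact (((hasDerivAt_id t).const_mul (3 * (v:ℝ)^2)).add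
      ((hasDerivAt_pow 3 t).const_mul ((v:ℝ)^3))).congr_deriv (by norm_num; ring))
  have m2 := iteratedDeriv_mgf_zero h0 2
  have m4 := iteratedDeriv_mgf_zero h0 4
  simp only [iteratedDeriv_succ, iteratedDeriv_zero, hm, d1, d2, d3, d4] at m2 m4
  constructor
  · simpa using m2.symm
  · simpa using m4.symm

open ProbabilityTheory in
lemma aux_memLp (v : NNReal) (c : ℝ) :
    MemLp (fun x : ℝ => x ^ 2 - c) 2 (gaussianReal 0 v) := by
  have h := (memLp_id_gaussianReal' (μ := 0) (v := v) 4 (by simp))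
  have h2 : MemLp (fun x : ℝ => x ^ 2) 2 (gaussianReal 0 v) := by
    have : MemLp (fun x : ℝ => x * x) 2 (gaussianReal 0 v) := by
      have hh : ENNReal.HolderTriple 4 4 2 := ⟨by
        rw [← ENNReal.toReal_eq_toReal_iff' (by simp) (by simp), ENNReal.toReal_add (by simp) (by simp)]
        norm_num⟩
      exact h.mul (hpqr := hh) h
    simpa [sq] using this
  exact h2.sub (memLp_const c)

open ProbabilityTheory in
lemma aux_var (v : NNReal) :
    Var[fun x : ℝ => x ^ 2; gaussianReal 0 v] = 2 * (v : ℝ) ^ 2 := by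
  have h2 : MemLp (fun x : ℝ => x ^ 2) 2 (gaussianReal 0 v) := by simpa using aux_memLp v 0
  rw [variance_eq_sub h2]
  have : ((fun x : ℝ => x ^ 2) ^ 2) = fun x : ℝ => x ^ 4 := by
    funext x; simp only [Pi.pow_apply]; ring
  rw [this, (aux_moments v).1, (aux_moments v).2]
  ring

open ProbabilityTheory in
/-- Cantelli-type bound. -/
lemma aux_cantelli {Ω : Type*} [MeasurableSpace Ω] (P : Measure Ω) [IsProbabilityMeasure P]
    (X : Ω → ℝ) (hX : MemLp X 2 P) (a : ℝ) (ha : 0 < a) (hv : Var[X; P] < a ^ 2) :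
    P {ω | X ω - P[X] ≤ -a} < ENNReal.ofReal (1 / 2) := by
  set m := P[X] with hm
  have hsub : {ω | X ω - m ≤ -a} ⊆ {ω | ENNReal.ofReal ((2 * a) ^ 2) ≤
      ENNReal.ofReal ((X ω - m - a) ^ 2)} := by
    intro ω hω
    simp only [Set.mem_ofPred_eq] at hω ⊢
    exact ENNReal.ofReal_le_ofReal (by nlinarith)
  have hY : MemLp (fun ω => X ω - m - a) 2 P := (hX.sub (memLp_const m)).sub (memLp_const a)
  have hint : ∫ ω, (X ω - m - a) ^ 2 ∂P = Var[X; P] + a ^ 2 := by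
    have h1 : Var[fun ω => X ω - m - a; P] = Var[X; P] := by
      have : (fun ω => X ω - m - a) = fun ω => X ω - (m + a) := by funext ω; ring
      rw [this, variance_sub_const hX.aestronglyMeasurable]
    have h2 := variance_eq_sub hY
    have h3 : ∫ ω, (X ω - m - a) ∂P = -a := by
      have hi : Integrable X P := hX.integrable (by norm_num)
      have e : ∀ ω, X ω - m - a = X ω - (m + a) := fun ω => by ring
      simp_rw [e]
      rw [integral_sub hi (integrable_const (m + a)), ← hm]
      simp
    rw [h1, h3] at h2
    simp only [Pi.pow_apply] at h2
    rw [h2]; ring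
  have hmk := mul_meas_ge_le_lintegral₀ (μ := P)
    (f := fun ω => ENNReal.ofReal ((X ω - m - a) ^ 2))
    (hY.aestronglyMeasurable.aemeasurable.pow_const 2).ennreal_ofReal (ENNReal.ofReal ((2 * a) ^ 2))
  rw [← ofReal_integral_eq_lintegral_ofReal hY.integrable_sq
    (Filter.Eventually.of_forall fun ω => sq_nonneg _), hint] at hmk
  refine (measure_mono hsub).trans_lt ?_
  by_contra hcon
  rw [not_lt] at hcon
  have h5 := (mul_le_mul_right hcon (ENNReal.ofReal ((2 * a) ^ 2))).trans hmk
  rw [← ENNReal.ofReal_mul (by positivity), ENNReal.ofReal_le_ofReal_iff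
    (add_nonneg (variance_nonneg _ _) (sq_nonneg a))] at h5
  nlinarith

open ProbabilityTheory in
theorem median_radius_bounds {d : ℕ} (μ : Fin d → ℝ)
    (S : Matrix (Fin d) (Fin d) ℝ) (hS : S.PosDef) (n k : ℕ) (hn : 1 ≤ n) (hk : 1 ≤ k)
    (β : ℝ) (hβ0 : 0 < β) (hβ1 : β < 1 / 2)
    (hF : frobNorm S * Real.sqrt (Real.log (n * k / β)) ≤ (1 / 8) * S.trace)
    (h2 : specNorm S * (Real.log (n * k / β)) ^ 2 ≤ (1 / 8) * S.trace)
    (R : ℝ) (hR : 0 < R)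
    (hmed : mvGaussian d μ S {x | Real.sqrt (∑ i, (x i - μ i) ^ 2) ≤ R} =
      ENNReal.ofReal (1 / 2)) :
    Real.sqrt ((3 / 4) * S.trace) < R ∧ R < Real.sqrt ((3 / 2) * S.trace) := by
  rw [aux_ball μ S hS R] at hmed
  have hpos := hS.eigenvalues_pos
  have htr : S.trace = ∑ i, hS.1.eigenvalues i := by simpa using hS.1.trace_eq_sum_eigenvalues
  have hfr := aux_frob S hS.1
  set l := hS.1.eigenvalues with hl
  set T := S.trace with hT
  set P := Measure.pi (fun i => gaussianReal 0 (l i).toNNReal) with hP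
  rcases Nat.eq_zero_or_pos d with hd | hd
  · subst hd
    exfalso
    have : {y : Fin 0 → ℝ | Real.sqrt (∑ i, y i ^ 2) ≤ R} = Set.univ := by
      ext y; simp [hR.le]
    rw [this, measure_univ] at hmed
    have h := congrArg ENNReal.toReal hmed
    norm_num at h
  have : Nonempty (Fin d) := ⟨⟨0, hd⟩⟩
  have hTpos : 0 < T := by
    rw [htr]; exact Finset.sum_pos (fun i _ => hpos i) Finset.univ_nonempty
  -- the logarithm is larger than one half
  have hL : 1 / 2 < Real.log (n * k / β) := by
    have h1 : (2:ℝ) ≤ n * k / β := by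
      rw [le_div_iff₀ hβ0]
      have hn' : (1:ℝ) ≤ n := by exact_mod_cast hn
      have hk' : (1:ℝ) ≤ k := by exact_mod_cast hk
      nlinarith
    have := Real.log_le_log (by norm_num) h1
    have := Real.log_two_gt_d9
    linarith
  have hQ : 2 * ∑ i, l i ^ 2 < (T / 4) ^ 2 := by
    have h0 : 0 ≤ ∑ i, l i ^ 2 := Finset.sum_nonneg fun i _ => sq_nonneg _
    have h1 : (frobNorm S * Real.sqrt (Real.log (n * k / β))) ^ 2 ≤ ((1 / 8) * T) ^ 2 :=
      pow_le_pow_left₀ (mul_nonneg (Real.sqrt_nonneg _) (Real.sqrt_nonneg _)) hF 2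
    rw [mul_pow, Real.sq_sqrt (by linarith), frobNorm, hfr, Real.sq_sqrt h0] at h1
    have h3 : 0 < ∑ i, l i ^ 2 :=
      Finset.sum_pos (fun i _ => pow_pos (hpos i) 2) Finset.univ_nonempty
    nlinarith
  -- the squared norm
  have hml : ∀ i, MemLp (fun x : ℝ => x ^ 2) 2 (gaussianReal 0 (l i).toNNReal) := fun i => by
    simpa using aux_memLp (l i).toNNReal 0
  set X : (Fin d → ℝ) → ℝ := ∑ i, fun y => y i ^ 2 with hX
  have hXa : ∀ y, X y = ∑ i, y i ^ 2 := fun y => by simp [hX]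
  have hmi : ∀ i, MemLp (fun y : Fin d → ℝ => y i ^ 2) 2 P := fun i =>
    (hml i).comp_measurePreserving (measurePreserving_eval _ i)
  have hXm : MemLp X 2 P := memLp_finsetSum' _ fun i _ => hmi i
  have hvar : Var[X; P] = 2 * ∑ i, l i ^ 2 := by
    rw [hX, hP, variance_sum_pi (X := fun _ x => x ^ 2) hml, Finset.mul_sum]
    refine Finset.sum_congr rfl fun i _ => ?_
    rw [aux_var, Real.coe_toNNReal _ (hpos i).le]
  have hmean : P[X] = T := by
    simp_rw [hXa]
    rw [integral_finsetSum _ fun i _ => (hmi i).integrable (by norm_num), htr]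
    refine Finset.sum_congr rfl fun i _ => ?_
    have h := integral_comp_eval (μ := fun i => gaussianReal 0 (l i).toNNReal) (i := i)
      (hml i).aestronglyMeasurable
    rw [← hP] at h
    rw [h, (aux_moments _).1, Real.coe_toNNReal _ (hpos i).le]
  have ha : 0 < T / 4 := by linarith
  constructor
  · by_contra hcon
    rw [not_lt] at hcon
    have hlt := aux_cantelli P X hXm (T / 4) ha (hvar ▸ hQ)
    refine absurd hmed (ne_of_lt ((measure_mono ?_).trans_lt hlt))
    intro y hy
    simp only [Set.mem_ofPred_eq] at hy ⊢
    rw [hmean, hXa]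
    have := (Real.sqrt_le_sqrt_iff (by positivity)).1 (hy.trans hcon)
    linarith
  · by_contra hcon
    rw [not_lt] at hcon
    have hlt := aux_cantelli P (-X) hXm.neg (T / 4) ha (by rw [variance_neg, hvar]; exact hQ)
    have hmB : MeasurableSet {x : Fin d → ℝ | Real.sqrt (∑ i, x i ^ 2) ≤ R} :=
      measurableSet_le (by fun_prop) measurable_const
    have hc := prob_compl_eq_one_sub (μ := P) hmB
    rw [hmed] at hc
    have h12 : (1 : ENNReal) - ENNReal.ofReal (1 / 2) = ENNReal.ofReal (1 / 2) := by
      rw [← ENNReal.ofReal_one, ← ENNReal.ofReal_sub _ (by norm_num)]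
      norm_num
    rw [h12] at hc
    refine absurd hc (ne_of_lt ((measure_mono ?_).trans_lt hlt))
    intro y hy
    simp only [Set.mem_compl_iff, Set.mem_ofPred_eq, not_le] at hy ⊢
    have hm' : P[-X] = -T := by
      simp only [Pi.neg_apply]
      rw [integral_neg, hmean]
    rw [hm', Pi.neg_apply, hXa]
    have := (Real.sqrt_lt_sqrt_iff (by positivity)).1 (hcon.trans_lt hy)
    linarith
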